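/- Let s>7/2 be an integer and α a multi-index with |α|≤s. There is a constant C, depending only on s and an upper bound K for ‖ρ⁰‖_{H^s(𝕋³)}, such that for all N∈H^s(𝕋³) and U∈H^s(𝕋³;ℝ³): ‖∂^α_x((N+ρ⁰)div U) − (N+ρ⁰)∂^α_x div U‖_{L²(𝕋³)} ≤ C(‖(N,U)‖²_{H^s} + ‖(N,U)‖_{H^s}). -/

import Mathlib

open MeasureTheory Real
open scoped ENNReal

noncomputable section

/-! ### Basic setup: periodic fields on the torus `𝕋³ = (ℝ/2πℤ)³`

Functions on the torus are modelled as `2π`-periodic functions on `ℝ³`,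
with all integrals (`L²` and `H^s` norms, inner products) taken over the
fundamental cube `Q3 = [0,2π]³`. -/

/-- A point of space `ℝ³`. -/
abbrev Pt : Type := Fin 3 → ℝ

/-- Scalar fields. -/
abbrev SF : Type := Pt → ℝ

/-- Vector fields, componentwise. -/
abbrev VF : Type := Fin 3 → SF

/-- The fundamental cube `[0,2π]³` of the torus. -/
def Q3 : Set Pt := Set.univ.pi fun _ => Set.Icc 0 (2 * π)

/-- `2π`-periodicity in each coordinate: such a function descends to `𝕋³`. -/
def PerS (f : SF) : Prop := ∀ (x : Pt) (i : Fin 3), f (x + Pi.single i (2 * π)) = f x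

/-- Componentwise periodicity of a vector field. -/
def PerV (v : VF) : Prop := ∀ i, PerS (v i)

/-- SmoothS scalar field (proxy for membership in the Sobolev spaces `H^k(𝕋³)`,
together with periodicity). -/
abbrev SmoothS (f : SF) : Prop := ContDiff ℝ (⊤ : ℕ∞) f

/-- SmoothS vector field. -/
abbrev SmoothV (v : VF) : Prop := ∀ i, ContDiff ℝ (⊤ : ℕ∞) (v i)

/-- Partial derivative `∂_i`. -/
def pd (i : Fin 3) (f : SF) : SF := fun x => fderiv ℝ f x (Pi.single i 1)

/-- Iterated partial derivative in a fixed direction. -/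
def pdIter (i : Fin 3) : ℕ → SF → SF
  | 0, f => f
  | n + 1, f => pd i (pdIter i n f)

/-- The spatial derivative `∂^α_x` for a multi-index `α`. -/
def mderiv (α : Fin 3 → ℕ) (f : SF) : SF :=
  pdIter 0 (α 0) (pdIter 1 (α 1) (pdIter 2 (α 2) f))

/-- `∂^α_x` of a vector field, componentwise. -/
def mderivV (α : Fin 3 → ℕ) (v : VF) : VF := fun i => mderiv α (v i)

/-- `L²(𝕋³)` norm of a scalar field. -/
def L2 (f : SF) : ℝ := (∫ x in Q3, (f x) ^ 2) ^ (1/2 : ℝ)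

/-- `L²(𝕋³)` norm of a vector field. -/
def L2V (v : VF) : ℝ := (∫ x in Q3, ∑ i, (v i x) ^ 2) ^ (1/2 : ℝ)

/-- `L²(𝕋³)` inner product of scalar fields. -/
def ip (f g : SF) : ℝ := ∫ x in Q3, f x * g x

/-- `L²(𝕋³)` inner product of vector fields. -/
def ipV (v w : VF) : ℝ := ∫ x in Q3, ∑ i, v i x * w i x

/-- The finite set of multi-indices `α` with `|α| ≤ s`. -/
def midx (s : ℕ) : Finset (Fin 3 → ℕ) :=
  (Fintype.piFinset fun _ => Finset.range (s + 1)).filter fun α => (∑ i, α i) ≤ s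

/-- `H^s(𝕋³)` norm of a scalar field. -/
def HsNorm (s : ℕ) (f : SF) : ℝ := (∑ α ∈ midx s, (L2 (mderiv α f)) ^ 2) ^ (1/2 : ℝ)

/-- `H^s(𝕋³)` norm of a vector field. -/
def HsNormV (s : ℕ) (v : VF) : ℝ := (∑ i, (HsNorm s (v i)) ^ 2) ^ (1/2 : ℝ)

/-! ### Differential operators -/

/-- Gradient of a scalar field. -/
def grad (f : SF) : VF := fun i => pd i f

/-- Divergence of a vector field. -/
def divv (v : VF) : SF := fun x => ∑ i, pd i (v i) x

/-- Laplacian of a scalar field. -/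
def lap (f : SF) : SF := fun x => ∑ i, pd i (pd i f) x

/-- Curl of a vector field. -/
def curl (v : VF) : VF :=
  ![fun x => pd 1 (v 2) x - pd 2 (v 1) x,
    fun x => pd 2 (v 0) x - pd 0 (v 2) x,
    fun x => pd 0 (v 1) x - pd 1 (v 0) x]

/-- Cross product of vector fields. -/
def cross (a b : VF) : VF :=
  ![fun x => a 1 x * b 2 x - a 2 x * b 1 x,
    fun x => a 2 x * b 0 x - a 0 x * b 2 x,
    fun x => a 0 x * b 1 x - a 1 x * b 0 x]

/-- Pointwise dot product of vector fields. -/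
def vdot (a b : VF) : SF := fun x => ∑ i, a i x * b i x

/-- Pointwise squared Euclidean norm `|a|²` of a vector field. -/
def normSq (a : VF) : SF := fun x => ∑ i, (a i x) ^ 2

/-- Convective derivative `(u·∇)f`. -/
def conv (u : VF) (f : SF) : SF := fun x => ∑ i, u i x * pd i f x

/-- Convective derivative `(u·∇)v` of a vector field, componentwise. -/
def convV (u v : VF) : VF := fun j => conv u (v j)

/-- Symmetric gradient `D(u) = (∇u + ∇uᵀ)/2`, entrywise. -/
def Dsym (u : VF) (i j : Fin 3) : SF := fun x => (pd j (u i) x + pd i (u j) x) / 2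

/-- Squared Frobenius norm `|D(u)|²`. -/
def DabsSq (u : VF) : SF := fun x => ∑ i, ∑ j, (Dsym u i j x) ^ 2

/-- Squared Frobenius norm `|∇v|²` of the Jacobian of a vector field. -/
def gradSq (v : VF) : SF := fun x => ∑ i, ∑ j, (pd j (v i) x) ^ 2

/-- Squared Euclidean norm `|∇f|²` of the gradient of a scalar field. -/
def gradSqS (f : SF) : SF := fun x => ∑ i, (pd i f x) ^ 2

/-- Viscous stress tensor `Ψ(u) = 2μ D(u) + λ (div u) I₃`, entrywise. -/
def Psi (μ lam : ℝ) (u : VF) (i j : Fin 3) : SF :=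
  fun x => 2 * μ * Dsym u i j x + lam * divv u x * (if i = j then 1 else 0)

/-- `div Ψ(u)`, componentwise. -/
def divPsi (μ lam : ℝ) (u : VF) : VF := fun i => fun x => ∑ j, pd j (Psi μ lam u i j) x

/-- The viscous dissipation `Ψ(u):∇u = 2μ|D(u)|² + λ(div u)²`. -/
def PsiColon (μ lam : ℝ) (u : VF) : SF :=
  fun x => ∑ i, ∑ j, Psi μ lam u i j x * pd j (u i) x

/-- Pointwise time derivative of a time-dependent scalar field. -/
def dt (f : ℝ → SF) : ℝ → SF := fun t x => deriv (fun τ => f τ x) t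

/-- Pointwise time derivative of a time-dependent vector field. -/
def dtV (v : ℝ → VF) : ℝ → VF := fun t i x => deriv (fun τ => v τ i x) t

/-- The time interval `[0, T)` for `T ∈ (0, +∞]`. -/
def Dom (T : ℝ≥0∞) : Set ℝ := {t : ℝ | 0 ≤ t ∧ ENNReal.ofReal t < T}

/-- Continuity in time with values in `H^k(𝕋³)` on a time set `D`
(the class `C⁰(D, H^k)`). -/
def ContHs (k : ℕ) (D : Set ℝ) (f : ℝ → SF) : Prop :=
  ∀ t₀ ∈ D, ∀ ε > (0:ℝ), ∃ δ > (0:ℝ), ∀ t ∈ D, |t - t₀| < δ →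
    HsNorm k (fun x => f t x - f t₀ x) < ε

/-- `C⁰(D, H^k)` for vector fields. -/
def ContHsV (k : ℕ) (D : Set ℝ) (v : ℝ → VF) : Prop := ∀ i, ContHs k D fun t => v t i

/-! ### The full compressible MHD system and the electromagnetic fluid system -/

/-- Classical solution of the full compressible MHD system
`∂_tρ + div(ρu) = 0`,
`ρ(∂_tu + u·∇u) + ∇(ρθ) = div Ψ(u) + curl H × H`,
`ρ(∂_tθ + u·∇θ) + ρθ div u = κΔθ + Ψ(u):∇u + |curl H|²`,
`∂_tH − curl(u×H) = −curl(curl H)`, `div H = 0`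
on the torus, on the time set `D` (all physical constants `𝔯 = c_V = σ = μ₀ = 1`). -/
structure IsMHDSol (μ lam κ : ℝ) (D : Set ℝ) (ρ θ : ℝ → SF) (u H : ℝ → VF) : Prop where
  perρ : ∀ t ∈ D, PerS (ρ t)
  perθ : ∀ t ∈ D, PerS (θ t)
  peru : ∀ t ∈ D, PerV (u t)
  perH : ∀ t ∈ D, PerV (H t)
  smρ : ∀ t ∈ D, SmoothS (ρ t)
  smθ : ∀ t ∈ D, SmoothS (θ t)
  smu : ∀ t ∈ D, SmoothV (u t)
  smH : ∀ t ∈ D, SmoothV (H t)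
  tdρ : ∀ (x : Pt), ∀ t ∈ D, DifferentiableAt ℝ (fun τ => ρ τ x) t
  tdθ : ∀ (x : Pt), ∀ t ∈ D, DifferentiableAt ℝ (fun τ => θ τ x) t
  tdu : ∀ (i : Fin 3) (x : Pt), ∀ t ∈ D, DifferentiableAt ℝ (fun τ => u τ i x) t
  tdH : ∀ (i : Fin 3) (x : Pt), ∀ t ∈ D, DifferentiableAt ℝ (fun τ => H τ i x) t
  mass : ∀ t ∈ D, ∀ x, dt ρ t x + divv (fun i y => ρ t y * u t i y) x = 0
  mom : ∀ t ∈ D, ∀ x, ∀ i,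
    ρ t x * (dtV u t i x + convV (u t) (u t) i x) + pd i (fun y => ρ t y * θ t y) x
      = divPsi μ lam (u t) i x + cross (curl (H t)) (H t) i x
  temp : ∀ t ∈ D, ∀ x,
    ρ t x * (dt θ t x + conv (u t) (θ t) x) + ρ t x * θ t x * divv (u t) x
      = κ * lap (θ t) x + PsiColon μ lam (u t) x + normSq (curl (H t)) x
  induction : ∀ t ∈ D, ∀ x, ∀ i,
    dtV H t i x - curl (cross (u t) (H t)) i x = - curl (curl (H t)) i x
  divH : ∀ t ∈ D, ∀ x, divv (H t) x = 0

/-- Classical solution of the electromagnetic fluid system with dielectric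
constant `ε > 0`:
`∂_tρ + div(ρu) = 0`,
`ρ(∂_tu + u·∇u) + ∇(ρθ) = div Ψ(u) + (E + u×H) × H`,
`ρ(∂_tθ + u·∇θ) + ρθ div u = κΔθ + Ψ(u):∇u + |E + u×H|²`,
`ε∂_tE − curl H + E + u×H = 0`,
`∂_tH + curl E = 0`, `div H = 0`
on the torus, on the time set `D`. -/
structure IsEMSol (μ lam κ eps : ℝ) (D : Set ℝ) (ρ θ : ℝ → SF) (u E H : ℝ → VF) : Prop where
  perρ : ∀ t ∈ D, PerS (ρ t)
  perθ : ∀ t ∈ D, PerS (θ t)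
  peru : ∀ t ∈ D, PerV (u t)
  perE : ∀ t ∈ D, PerV (E t)
  perH : ∀ t ∈ D, PerV (H t)
  smρ : ∀ t ∈ D, SmoothS (ρ t)
  smθ : ∀ t ∈ D, SmoothS (θ t)
  smu : ∀ t ∈ D, SmoothV (u t)
  smE : ∀ t ∈ D, SmoothV (E t)
  smH : ∀ t ∈ D, SmoothV (H t)
  tdρ : ∀ (x : Pt), ∀ t ∈ D, DifferentiableAt ℝ (fun τ => ρ τ x) t
  tdθ : ∀ (x : Pt), ∀ t ∈ D, DifferentiableAt ℝ (fun τ => θ τ x) t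
  tdu : ∀ (i : Fin 3) (x : Pt), ∀ t ∈ D, DifferentiableAt ℝ (fun τ => u τ i x) t
  tdE : ∀ (i : Fin 3) (x : Pt), ∀ t ∈ D, DifferentiableAt ℝ (fun τ => E τ i x) t
  tdH : ∀ (i : Fin 3) (x : Pt), ∀ t ∈ D, DifferentiableAt ℝ (fun τ => H τ i x) t
  mass : ∀ t ∈ D, ∀ x, dt ρ t x + divv (fun i y => ρ t y * u t i y) x = 0
  mom : ∀ t ∈ D, ∀ x, ∀ i,
    ρ t x * (dtV u t i x + convV (u t) (u t) i x) + pd i (fun y => ρ t y * θ t y) x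
      = divPsi μ lam (u t) i x
        + cross (fun j y => E t j y + cross (u t) (H t) j y) (H t) i x
  temp : ∀ t ∈ D, ∀ x,
    ρ t x * (dt θ t x + conv (u t) (θ t) x) + ρ t x * θ t x * divv (u t) x
      = κ * lap (θ t) x + PsiColon μ lam (u t) x
        + normSq (fun j y => E t j y + cross (u t) (H t) j y) x
  faraday : ∀ t ∈ D, ∀ x, ∀ i,
    eps * dtV E t i x - curl (H t) i x + E t i x + cross (u t) (H t) i x = 0
  ampere : ∀ t ∈ D, ∀ x, ∀ i, dtV H t i x + curl (E t) i x = 0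
  divH : ∀ t ∈ D, ∀ x, divv (H t) x = 0

/-- The electric field `E⁰ = curl H⁰ − u⁰ × H⁰` induced by the limiting MHD flow. -/
def Efield (u H : VF) : VF := fun i x => curl H i x - cross u H i x

/-- `(N,U,Θ,F,G)` solves the error system obtained by subtracting the full
compressible MHD equations (background solution `(ρ⁰,u⁰,θ⁰,H⁰)`, with induced
electric field `E⁰ = curl H⁰ − u⁰×H⁰`) from the `ε`-dielectric electromagnetic
fluid system: equivalently, `(ρ⁰+N, u⁰+U, θ⁰+Θ, E⁰+F, H⁰+G)` solves the
electromagnetic fluid system. -/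
def IsErrSol (μ lam κ eps : ℝ) (D : Set ℝ) (ρ0 θ0 : ℝ → SF) (u0 H0 : ℝ → VF)
    (N Θ : ℝ → SF) (U F G : ℝ → VF) : Prop :=
  IsEMSol μ lam κ eps D
    (fun t x => ρ0 t x + N t x) (fun t x => θ0 t x + Θ t x)
    (fun t i x => u0 t i x + U t i x)
    (fun t i x => Efield (u0 t) (H0 t) i x + F t i x)
    (fun t i x => H0 t i x + G t i x)

/-- The error-system energy `‖ℰ‖_s = ‖(N,U,Θ,G)‖_s` (sum of the `H^s` norms). -/
def Enorm (s : ℕ) (N Θ : SF) (U G : VF) : ℝ :=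
  HsNorm s N + HsNormV s U + HsNorm s Θ + HsNormV s G

/-- The squared `ε`-weighted energy `⫴ℰ⫴²_s = ‖ℰ‖²_s + ε‖F‖²_s`. -/
def EnormSq (s : ℕ) (eps : ℝ) (N Θ : SF) (U F G : VF) : ℝ :=
  (Enorm s N Θ U G) ^ 2 + eps * (HsNormV s F) ^ 2

end

/-!
Applying the one-dimensional bound `h(x)² ≤ 2 ∫₀^{2π} (h² + h'²)` successively in the directions
of a set `S ⊆ {0, 1, 2}` controls `|∂^β f|²` pointwise by the `S`-marginal of the `H^m` density of
`f`, as soon as `|β| + |S| ≤ m`. Using `S` for `∂^β f` and the complementary directions for `∂^γ g`,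
the two marginals depend on disjoint sets of variables, so Tonelli's theorem gives
`‖∂^β f ∂^γ g‖_{L²} ≤ 8 ‖f‖_{H^m} ‖g‖_{H^n}` whenever `|β| ≤ m`, `|γ| ≤ n` and
`|β| + |γ| + 3 ≤ m + n`. The commutators are then reduced to such products by the recursion
`[∂^{α+e_j}, f] g = ∂^α (∂_j f · g) + [∂^α, f] ∂_j g`, in which every term of the first kind has at
least one derivative on `f`, so no derivative of `div U` of order `|α|` occurs.
-/

section OneDimensionalSobolev

variable {a b : ℝ} {h h' : ℝ → ℝ}

theorem sq_sub_sq_le_integral_sq_add_sq_deriv (hd : ∀ t ∈ Set.Icc a b, HasDerivAt h (h' t) t)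
    (hc : ContinuousOn h' (Set.Icc a b)) {x y : ℝ} (hx : x ∈ Set.Icc a b)
    (hy : y ∈ Set.Icc a b) :
    h x ^ 2 - h y ^ 2 ≤ ∫ t in a..b, (h t ^ 2 + h' t ^ 2) := by
  have hch : ContinuousOn h (Set.Icc a b) := fun t ht => (hd t ht).continuousAt.continuousWithinAt
  have hsub : Set.uIcc y x ⊆ Set.Icc a b := Set.uIcc_subset_Icc hy hx
  have hab : a ≤ b := hx.1.trans hx.2
  have hFTC : ∫ t in y..x, 2 * h t * h' t = h x ^ 2 - h y ^ 2 := by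
    refine intervalIntegral.integral_eq_sub_of_hasDerivAt (f := fun t => h t ^ 2) (fun t ht => ?_)
      (((hch.const_mul 2).mul hc).mono hsub).intervalIntegrable
    simpa using (hd t (hsub ht)).fun_pow 2
  have hYoung : ∀ t, |2 * h t * h' t| ≤ h t ^ 2 + h' t ^ 2 := fun t =>
    abs_le.2 ⟨by linarith [sq_nonneg (h t + h' t)], by linarith [sq_nonneg (h t - h' t)]⟩
  have hcont : ContinuousOn (fun t => h t ^ 2 + h' t ^ 2) (Set.Icc a b) :=
    (hch.pow 2).add (hc.pow 2)
  have hint : IntegrableOn (fun t => h t ^ 2 + h' t ^ 2) (Set.Ioc a b) :=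
    hcont.integrableOn_Icc.mono_set Set.Ioc_subset_Icc_self
  have hsub' : Set.uIoc y x ⊆ Set.Ioc a b :=
    Set.Ioc_subset_Ioc (le_min hy.1 hx.1) (max_le hy.2 hx.2)
  calc h x ^ 2 - h y ^ 2 ≤ ‖∫ t in y..x, 2 * h t * h' t‖ := by
        rw [hFTC]
        exact le_abs_self _
    _ ≤ |∫ t in y..x, (h t ^ 2 + h' t ^ 2)| :=
        intervalIntegral.norm_integral_le_abs_of_norm_le
          (Filter.Eventually.of_forall hYoung) (hcont.mono hsub).intervalIntegrable
    _ = ∫ t in Set.uIoc y x, (h t ^ 2 + h' t ^ 2) := by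
        rw [intervalIntegral.abs_integral_eq_abs_integral_uIoc, abs_of_nonneg]
        positivity
    _ ≤ ∫ t in a..b, (h t ^ 2 + h' t ^ 2) := by
        rw [intervalIntegral.integral_of_le hab]
        exact setIntegral_mono_set hint (Filter.Eventually.of_forall fun t => by positivity)
          hsub'.eventuallyLE

theorem sq_le_mul_integral_sq_add_sq_deriv (hab : a < b)
    (hd : ∀ t ∈ Set.Icc a b, HasDerivAt h (h' t) t) (hc : ContinuousOn h' (Set.Icc a b))
    {x : ℝ} (hx : x ∈ Set.Icc a b) :
    h x ^ 2 ≤ ((b - a)⁻¹ + 1) * ∫ t in a..b, (h t ^ 2 + h' t ^ 2) := by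
  have hch : ContinuousOn h (Set.Icc a b) := fun t ht => (hd t ht).continuousAt.continuousWithinAt
  obtain ⟨y, hy, hmin⟩ := isCompact_Icc.exists_isMinOn ⟨x, hx⟩ (hch.pow 2)
  have hmean : (b - a) * h y ^ 2 ≤ ∫ t in a..b, (h t ^ 2 + h' t ^ 2) := by
    rw [← smul_eq_mul, ← intervalIntegral.integral_const]
    refine intervalIntegral.integral_mono_on hab.le intervalIntegrable_const
      (((hch.pow 2).add (hc.pow 2)).intervalIntegrable_of_Icc hab.le) fun t ht => ?_
    exact (hmin ht).trans (le_add_of_nonneg_right (sq_nonneg _))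
  have hosc := sq_sub_sq_le_integral_sq_add_sq_deriv hd hc hx hy
  rw [← le_inv_mul_iff₀ (sub_pos.2 hab)] at hmean
  linarith

end OneDimensionalSobolev

section Marginal

variable {ι : Type*} [DecidableEq ι] {X : ι → Type*} [∀ i, MeasurableSpace (X i)]
  {μ : ∀ i, Measure (X i)}

theorem dependsOn_lmarginal (s : Finset ι) (f : (∀ i, X i) → ℝ≥0∞) :
    DependsOn (∫⋯∫⁻_s, f ∂μ) (s : Set ι)ᶜ :=
  fun _ _ hxy => lmarginal_congr μ f fun i hi => hxy i (by simpa using hi)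

theorem lmarginal_mul_of_dependsOn {s : Finset ι} {f g : (∀ i, X i) → ℝ≥0∞}
    (hf : DependsOn f (s : Set ι)ᶜ) (hg : Measurable g) :
    ∫⋯∫⁻_s, f * g ∂μ = f * ∫⋯∫⁻_s, g ∂μ := by
  ext x
  have hfx : ∀ y, f (Function.updateFinset x s y) = f x := fun y =>
    hf fun i hi => by simp_all [Function.updateFinset]
  simp only [lmarginal, Pi.mul_apply, hfx]
  exact lintegral_const_mul _ (hg.comp measurable_updateFinset)

theorem lintegral_lmarginal_mul_lmarginal_compl [Fintype ι] [∀ i, SigmaFinite (μ i)]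
    (s : Finset ι) {f g : (∀ i, X i) → ℝ≥0∞} (hf : Measurable f) (hg : Measurable g) :
    ∫⁻ x, (∫⋯∫⁻_s, f ∂μ) x * (∫⋯∫⁻_sᶜ, g ∂μ) x ∂Measure.pi μ =
      (∫⁻ x, f x ∂Measure.pi μ) * ∫⁻ x, g x ∂Measure.pi μ := by
  rcases isEmpty_or_nonempty (∀ i, X i) with _ | ⟨⟨x⟩⟩
  · simp
  have htower : ∀ {k : (∀ i, X i) → ℝ≥0∞}, Measurable k → ∀ t : Finset ι,
      ∫⋯∫⁻_tᶜ, ∫⋯∫⁻_t, k ∂μ ∂μ = fun _ => ∫⁻ x, k x ∂Measure.pi μ := fun hk t => by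
    rw [← lmarginal_union' μ _ hk disjoint_compl_right, Finset.union_compl, lmarginal_univ]
  have hinner : ∫⋯∫⁻_s, (∫⋯∫⁻_s, f ∂μ) * ∫⋯∫⁻_sᶜ, g ∂μ ∂μ =
      (fun _ => ∫⁻ x, g x ∂Measure.pi μ) * ∫⋯∫⁻_s, f ∂μ := by
    have hg' := htower hg sᶜ
    rw [compl_compl] at hg'
    rw [lmarginal_mul_of_dependsOn (dependsOn_lmarginal s f) (hg.lmarginal μ), hg', mul_comm]
  have hmul : Measurable ((∫⋯∫⁻_s, f ∂μ) * ∫⋯∫⁻_sᶜ, g ∂μ) :=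
    (hf.lmarginal μ).mul (hg.lmarginal μ)
  have houter := congrFun (htower hmul s) x
  rw [hinner, lmarginal_mul_of_dependsOn (fun _ _ _ => rfl) (hf.lmarginal μ), htower hf] at houter
  rw [mul_comm]
  exact houter.symm

end Marginal

section MultiIndex

variable {ι : Type*} [DecidableEq ι]

theorem sum_add_single [Fintype ι] (α : ι → ℕ) (i : ι) :
    ∑ j, (α + Pi.single i 1 : ι → ℕ) j = ∑ j, α j + 1 := by
  simp [Finset.sum_add_distrib]

theorem multiIndex_induction [Finite ι] {P : (ι → ℕ) → Prop} (zero : P 0)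
    (add_single : ∀ α i, P α → P (α + Pi.single i 1)) (α : ι → ℕ) : P α := by
  suffices h : ∀ β, P β → P (β + α) by simpa using h 0 zero
  induction α using Pi.single_induction with
  | zero => simp
  | add α γ hα hγ => exact fun β hβ => add_assoc β α γ ▸ hγ _ (hα _ hβ)
  | single i n =>
    intro β hβ
    induction n with
    | zero => simpa using hβ
    | succ n ih => simpa [Pi.single_add, add_assoc] using add_single _ i ih

end MultiIndex

theorem mem_midx {m : ℕ} {α : Fin 3 → ℕ} : α ∈ midx m ↔ ∑ i, α i ≤ m := by
  refine ⟨fun h => (Finset.mem_filter.1 h).2, fun h => Finset.mem_filter.2 ⟨?_, h⟩⟩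
  exact Fintype.mem_piFinset.2 fun i => Finset.mem_range_succ_iff.2
    ((Finset.single_le_sum (fun _ _ => Nat.zero_le _) (Finset.mem_univ i)).trans h)

section Calculus

variable {f g : SF}

theorem smoothS_add (hf : SmoothS f) (hg : SmoothS g) : SmoothS (f + g) := hf.add hg

theorem smoothS_mul (hf : SmoothS f) (hg : SmoothS g) : SmoothS (f * g) := hf.mul hg

theorem smoothS_pd (i : Fin 3) (hf : SmoothS f) : SmoothS (pd i f) :=
  (hf.fderiv_right (by simp)).clm_apply contDiff_const

theorem pd_add (i : Fin 3) (hf : SmoothS f) (hg : SmoothS g) :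
    pd i (f + g) = pd i f + pd i g := by
  ext x
  simp [pd, fderiv_add (hf.differentiable (by simp) x) (hg.differentiable (by simp) x)]

theorem pd_mul (i : Fin 3) (hf : SmoothS f) (hg : SmoothS g) :
    pd i (f * g) = pd i f * g + f * pd i g := by
  ext x
  simp only [pd, fderiv_mul (hf.differentiable (by simp) x) (hg.differentiable (by simp) x),
    Pi.add_apply, Pi.mul_apply, add_apply, smul_apply, smul_eq_mul]
  ring

theorem pd_comm (i j : Fin 3) (hf : SmoothS f) : pd i (pd j f) = pd j (pd i f) := by
  have hdiff : Differentiable ℝ (fderiv ℝ f) :=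
    (hf.fderiv_right (m := 1) (by norm_cast)).differentiable (by simp)
  have hpd_pd : ∀ (k l : Fin 3) (x : Pt),
      pd k (pd l f) x = fderiv ℝ (fderiv ℝ f) x (Pi.single k 1) (Pi.single l 1) := by
    intro k l x
    change fderiv ℝ (fun y => fderiv ℝ f y (Pi.single l 1)) x (Pi.single k 1) = _
    simp [fderiv_clm_apply (hdiff x) (differentiableAt_const _)]
  ext x
  have hsymm : IsSymmSndFDerivAt ℝ f x := hf.contDiffAt.isSymmSndFDerivAt <| by
    rw [minSmoothness_of_isRCLikeNormedField]
    norm_cast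
  rw [hpd_pd, hpd_pd, hsymm.eq]

theorem smoothS_pdIter (i : Fin 3) (n : ℕ) (hf : SmoothS f) : SmoothS (pdIter i n f) := by
  induction n with
  | zero => exact hf
  | succ n ih => exact smoothS_pd i ih

theorem pdIter_add (i : Fin 3) (n : ℕ) (hf : SmoothS f) (hg : SmoothS g) :
    pdIter i n (f + g) = pdIter i n f + pdIter i n g := by
  induction n with
  | zero => rfl
  | succ n ih => simp only [pdIter, ih, pd_add i (smoothS_pdIter i n hf) (smoothS_pdIter i n hg)]

theorem pd_pdIter (i j : Fin 3) (n : ℕ) (hf : SmoothS f) :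
    pd j (pdIter i n f) = pdIter i n (pd j f) := by
  induction n with
  | zero => rfl
  | succ n ih => simp only [pdIter, pd_comm j i (smoothS_pdIter i n hf), ih]

theorem smoothS_mderiv (α : Fin 3 → ℕ) (hf : SmoothS f) : SmoothS (mderiv α f) :=
  smoothS_pdIter _ _ (smoothS_pdIter _ _ (smoothS_pdIter _ _ hf))

theorem mderiv_zero (f : SF) : mderiv 0 f = f := rfl

theorem mderiv_single (i : Fin 3) (f : SF) : mderiv (Pi.single i 1) f = pd i f := by
  fin_cases i <;> rfl

theorem mderiv_add (α : Fin 3 → ℕ) (hf : SmoothS f) (hg : SmoothS g) :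
    mderiv α (f + g) = mderiv α f + mderiv α g := by
  have smooth₂ {h : SF} (hh : SmoothS h) := smoothS_pdIter 2 (α 2) hh
  have smooth₁ {h : SF} (hh : SmoothS h) := smoothS_pdIter 1 (α 1) (smooth₂ hh)
  simp only [mderiv, pdIter_add 2 _ hf hg, pdIter_add 1 _ (smooth₂ hf) (smooth₂ hg),
    pdIter_add 0 _ (smooth₁ hf) (smooth₁ hg)]

theorem pd_mderiv (α : Fin 3 → ℕ) (i : Fin 3) (hf : SmoothS f) :
    pd i (mderiv α f) = mderiv α (pd i f) := by
  have smooth₂ := smoothS_pdIter 2 (α 2) hf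
  have smooth₁ := smoothS_pdIter 1 (α 1) smooth₂
  simp only [mderiv, pd_pdIter 0 i _ smooth₁, pd_pdIter 1 i _ smooth₂, pd_pdIter 2 i _ hf]

theorem mderiv_add_single (α : Fin 3 → ℕ) (i : Fin 3) (hf : SmoothS f) :
    mderiv (α + Pi.single i 1) f = pd i (mderiv α f) := by
  have smooth₂ := smoothS_pdIter 2 (α 2) hf
  have smooth₁ := smoothS_pdIter 1 (α 1) smooth₂
  fin_cases i <;>
    simp [mderiv, pdIter, pd_pdIter 0 _ _ smooth₁, pd_pdIter 1 2 _ smooth₂]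

theorem mderiv_pd (α : Fin 3 → ℕ) (i : Fin 3) (hf : SmoothS f) :
    mderiv α (pd i f) = mderiv (α + Pi.single i 1) f := by
  rw [mderiv_add_single α i hf, pd_mderiv α i hf]

end Calculus

section SquareIntegrals

/-- Lebesgue measure on each edge `[0, 2π]` of the cube `Q3`: its product `Measure.pi edgeMeasure`
is the measure on `𝕋³`, and its marginals `∫⋯∫⁻_S, f ∂edgeMeasure` integrate over the directions
in `S` only. -/
noncomputable abbrev edgeMeasure : Fin 3 → Measure ℝ := fun _ => volume.restrict (Set.Icc 0 (2 * π))

variable {f g : SF}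

theorem restrict_Q3 : volume.restrict Q3 = Measure.pi edgeMeasure := by
  rw [Q3, volume_pi, Measure.restrict_pi_pi]

theorem isCompact_Q3 : IsCompact Q3 := isCompact_univ_pi fun _ => isCompact_Icc

theorem sq_L2 (f : SF) : L2 f ^ 2 = ∫ x in Q3, f x ^ 2 := by
  rw [L2, ← sqrt_eq_rpow, sq_sqrt (integral_nonneg fun _ => sq_nonneg _)]

theorem memLp_two_Q3 (hf : Continuous f) : MemLp f 2 (volume.restrict Q3) :=
  (memLp_two_iff_integrable_sq hf.aestronglyMeasurable).2
    ((hf.pow 2).continuousOn.integrableOn_compact isCompact_Q3)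

theorem L2_eq_lpNorm (hf : Continuous f) : L2 f = lpNorm f 2 (volume.restrict Q3) := by
  rw [lpNorm_eq_integral_norm_rpow_toReal two_ne_zero ENNReal.ofNat_ne_top
    hf.aestronglyMeasurable]
  simp [L2]

theorem L2_add_le (hf : Continuous f) (hg : Continuous g) : L2 (f + g) ≤ L2 f + L2 g := by
  rw [L2_eq_lpNorm (hf.add hg), L2_eq_lpNorm hf, L2_eq_lpNorm hg]
  exact lpNorm_add_le (memLp_two_Q3 hf) one_le_two

theorem ofReal_integral_Q3 (hf : Continuous f) (hf₀ : 0 ≤ f) :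
    ENNReal.ofReal (∫ x in Q3, f x) = ∫⁻ x in Q3, ENNReal.ofReal (f x) :=
  ofReal_integral_eq_lintegral_ofReal
    (hf.continuousOn.integrableOn_compact isCompact_Q3) (Filter.Eventually.of_forall hf₀)

theorem ofReal_sq_L2 (hf : Continuous f) :
    ENNReal.ofReal (L2 f ^ 2) = ∫⁻ x in Q3, ENNReal.ofReal (f x ^ 2) := by
  rw [sq_L2]
  exact ofReal_integral_Q3 (hf.pow 2) fun _ => sq_nonneg _

/-- The density `∑_{|γ| ≤ m} |∂^γ f|²` of the squared Sobolev norm `‖f‖²_{H^m}`. -/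
noncomputable def jetSq (m : ℕ) (f : SF) : SF := fun x => ∑ γ ∈ midx m, mderiv γ f x ^ 2

theorem jetSq_nonneg (m : ℕ) (f : SF) : 0 ≤ jetSq m f :=
  fun _ => Finset.sum_nonneg fun _ _ => sq_nonneg _

theorem continuous_jetSq (m : ℕ) (hf : SmoothS f) : Continuous (jetSq m f) :=
  continuous_finsetSum _ fun γ _ => (smoothS_mderiv γ hf).continuous.pow 2

theorem sq_mderiv_le_jetSq {m : ℕ} {β : Fin 3 → ℕ} (hβ : ∑ j, β j ≤ m) (f : SF) (x : Pt) :
    mderiv β f x ^ 2 ≤ jetSq m f x :=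
  Finset.single_le_sum (fun γ _ => sq_nonneg (mderiv γ f x)) (mem_midx.2 hβ)

theorem HsNorm_nonneg (m : ℕ) (f : SF) : 0 ≤ HsNorm m f :=
  rpow_nonneg (Finset.sum_nonneg fun _ _ => sq_nonneg _) _

theorem sq_HsNorm (m : ℕ) (hf : SmoothS f) : HsNorm m f ^ 2 = ∫ x in Q3, jetSq m f x := by
  rw [HsNorm, ← sqrt_eq_rpow, sq_sqrt (Finset.sum_nonneg fun _ _ => sq_nonneg _)]
  simp only [sq_L2, jetSq]
  exact (integral_finsetSum _ fun γ _ =>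
    (memLp_two_Q3 (smoothS_mderiv γ hf).continuous).integrable_sq).symm

theorem lintegral_jetSq (m : ℕ) (hf : SmoothS f) :
    ∫⁻ x, ENNReal.ofReal (jetSq m f x) ∂Measure.pi edgeMeasure =
      ENNReal.ofReal (HsNorm m f ^ 2) := by
  rw [sq_HsNorm m hf, ofReal_integral_Q3 (continuous_jetSq m hf) (jetSq_nonneg m f), restrict_Q3]

theorem HsNormV_nonneg (m : ℕ) (U : VF) : 0 ≤ HsNormV m U :=
  rpow_nonneg (Finset.sum_nonneg fun _ _ => sq_nonneg _) _

theorem HsNorm_le_HsNormV (m : ℕ) (U : VF) (i : Fin 3) : HsNorm m (U i) ≤ HsNormV m U := by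
  rw [HsNormV, ← sqrt_eq_rpow]
  exact le_sqrt_of_sq_le
    (Finset.single_le_sum (fun i _ => sq_nonneg (HsNorm m (U i))) (Finset.mem_univ i))

end SquareIntegrals

section AnisotropicSobolev

variable {f g : SF}

theorem hasDerivAt_comp_update (hf : SmoothS f) (i : Fin 3) (x : Pt) (t : ℝ) :
    HasDerivAt (fun t => f (Function.update x i t)) (pd i f (Function.update x i t)) t :=
  (hf.differentiable (by simp) _).hasFDerivAt.comp_hasDerivAt t (hasDerivAt_update x i t)

theorem update_mem_Q3 {x : Pt} (hx : x ∈ Q3) (i : Fin 3) {t : ℝ} (ht : t ∈ Set.Icc 0 (2 * π)) :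
    Function.update x i t ∈ Q3 :=
  (Set.update_mem_pi_iff_of_mem hx).2 fun _ => ht

theorem ofReal_sq_le_setLIntegral (hf : SmoothS f) (i : Fin 3) {x : Pt} (hx : x ∈ Q3) :
    ENNReal.ofReal (f x ^ 2) ≤ 2 * ∫⁻ t in Set.Icc 0 (2 * π),
      ENNReal.ofReal (f (Function.update x i t) ^ 2 + pd i f (Function.update x i t) ^ 2) := by
  have hupd : Continuous fun t => Function.update x i t := continuous_const.update i continuous_id
  have hcont : Continuous fun t => pd i f (Function.update x i t) :=
    (smoothS_pd i hf).continuous.comp hupd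
  have hcont' : Continuous fun t =>
      f (Function.update x i t) ^ 2 + pd i f (Function.update x i t) ^ 2 :=
    ((hf.continuous.comp hupd).pow 2).add (hcont.pow 2)
  have hconst : (2 * π - 0)⁻¹ + 1 ≤ 2 := by
    have : (2 * π - 0)⁻¹ ≤ 1 := inv_le_one_of_one_le₀ (by linarith [pi_gt_three])
    linarith
  have hsobolev := sq_le_mul_integral_sq_add_sq_deriv two_pi_pos
    (fun t _ => hasDerivAt_comp_update hf i x t) hcont.continuousOn (hx i trivial)
  rw [Function.update_eq_self, intervalIntegral.integral_of_le two_pi_pos.le,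
    ← integral_Icc_eq_integral_Ioc] at hsobolev
  have hnonneg : 0 ≤ᵐ[volume.restrict (Set.Icc 0 (2 * π))] fun t =>
      f (Function.update x i t) ^ 2 + pd i f (Function.update x i t) ^ 2 :=
    Filter.Eventually.of_forall fun t => by positivity
  rw [← ofReal_integral_eq_lintegral_ofReal hcont'.continuousOn.integrableOn_Icc hnonneg,
    ← ENNReal.ofReal_ofNat 2, ← ENNReal.ofReal_mul zero_le_two]
  exact ENNReal.ofReal_le_ofReal
    (hsobolev.trans (mul_le_mul_of_nonneg_right hconst (integral_nonneg_of_ae hnonneg)))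

theorem ofReal_sq_mderiv_le_lmarginal {m : ℕ} (hf : SmoothS f) (S : Finset (Fin 3))
    {β : Fin 3 → ℕ} (hβ : ∑ j, β j + S.card ≤ m) {x : Pt} (hx : x ∈ Q3) :
    ENNReal.ofReal (mderiv β f x ^ 2) ≤
      4 ^ S.card * (∫⋯∫⁻_S, fun y => ENNReal.ofReal (jetSq m f y) ∂edgeMeasure) x := by
  set J : Pt → ℝ≥0∞ := fun y => ENNReal.ofReal (jetSq m f y)
  have hJ : Measurable J := (continuous_jetSq m hf).measurable.ennreal_ofReal
  induction S using Finset.induction_on generalizing β x with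
  | empty =>
    simpa [J] using ENNReal.ofReal_le_ofReal (sq_mderiv_le_jetSq (by simpa using hβ) f x)
  | insert i T hi ih =>
    rw [Finset.card_insert_of_notMem hi] at hβ ⊢
    have hih : ∀ t ∈ Set.Icc 0 (2 * π),
        ENNReal.ofReal (mderiv β f (Function.update x i t) ^ 2 +
          pd i (mderiv β f) (Function.update x i t) ^ 2) ≤
        2 * 4 ^ T.card * (∫⋯∫⁻_T, J ∂edgeMeasure) (Function.update x i t) := fun t ht => by
      have hcard := sum_add_single β i
      rw [← mderiv_add_single β i hf, ENNReal.ofReal_add (sq_nonneg _) (sq_nonneg _), mul_assoc,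
        two_mul]
      exact add_le_add (ih (by lia) (update_mem_Q3 hx i ht)) (ih (by lia) (update_mem_Q3 hx i ht))
    have hslice : Measurable fun t => (∫⋯∫⁻_T, J ∂edgeMeasure) (Function.update x i t) :=
      (hJ.lmarginal edgeMeasure).comp (measurable_update x)
    calc ENNReal.ofReal (mderiv β f x ^ 2)
        ≤ 2 * ∫⁻ t in Set.Icc 0 (2 * π), ENNReal.ofReal (mderiv β f (Function.update x i t) ^ 2 +
            pd i (mderiv β f) (Function.update x i t) ^ 2) :=
          ofReal_sq_le_setLIntegral (smoothS_mderiv β hf) i hx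
      _ ≤ 2 * ∫⁻ t in Set.Icc 0 (2 * π),
            2 * 4 ^ T.card * (∫⋯∫⁻_T, J ∂edgeMeasure) (Function.update x i t) := by
          gcongr 2 * ?_
          exact setLIntegral_mono' measurableSet_Icc hih
      _ = 4 ^ (T.card + 1) * (∫⋯∫⁻_insert i T, J ∂edgeMeasure) x := by
          rw [lmarginal_insert J hJ hi, lintegral_const_mul _ hslice, ← mul_assoc]
          ring

theorem L2_mderiv_mul_mderiv_le_of_card {m n : ℕ} {β γ : Fin 3 → ℕ} (hf : SmoothS f)
    (hg : SmoothS g) (S : Finset (Fin 3)) (hβ : ∑ j, β j + S.card ≤ m)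
    (hγ : ∑ j, γ j + Sᶜ.card ≤ n) :
    L2 (mderiv β f * mderiv γ g) ≤ 8 * (HsNorm m f * HsNorm n g) := by
  have hpow : (4 : ℝ≥0∞) ^ S.card * 4 ^ Sᶜ.card = 64 := by
    rw [← pow_add, S.card_add_card_compl, Fintype.card_fin]
    norm_num
  set F : Pt → ℝ≥0∞ := fun y => ENNReal.ofReal (jetSq m f y)
  set G : Pt → ℝ≥0∞ := fun y => ENNReal.ofReal (jetSq n g y)
  have hF : Measurable F := (continuous_jetSq m hf).measurable.ennreal_ofReal
  have hG : Measurable G := (continuous_jetSq n hg).measurable.ennreal_ofReal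
  have hcont : Continuous (mderiv β f * mderiv γ g) :=
    (smoothS_mderiv β hf).continuous.mul (smoothS_mderiv γ hg).continuous
  have hpointwise : ∀ x ∈ Q3, ENNReal.ofReal ((mderiv β f * mderiv γ g) x ^ 2) ≤
      64 * ((∫⋯∫⁻_S, F ∂edgeMeasure) x * (∫⋯∫⁻_Sᶜ, G ∂edgeMeasure) x) := fun x hx => by
    rw [Pi.mul_apply, mul_pow, ENNReal.ofReal_mul (sq_nonneg _), ← hpow, mul_mul_mul_comm]
    exact mul_le_mul' (ofReal_sq_mderiv_le_lmarginal hf S hβ hx)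
      (ofReal_sq_mderiv_le_lmarginal hg Sᶜ hγ hx)
  have hmul : Measurable fun x => (∫⋯∫⁻_S, F ∂edgeMeasure) x * (∫⋯∫⁻_Sᶜ, G ∂edgeMeasure) x :=
    (hF.lmarginal _).mul (hG.lmarginal _)
  refine le_of_sq_le_sq ((ENNReal.ofReal_le_ofReal_iff (sq_nonneg _)).1 ?_)
    (by positivity [HsNorm_nonneg m f, HsNorm_nonneg n g])
  calc ENNReal.ofReal (L2 (mderiv β f * mderiv γ g) ^ 2)
      = ∫⁻ x in Q3, ENNReal.ofReal ((mderiv β f * mderiv γ g) x ^ 2) :=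
        ofReal_sq_L2 hcont
    _ ≤ ∫⁻ x in Q3, 64 * ((∫⋯∫⁻_S, F ∂edgeMeasure) x * (∫⋯∫⁻_Sᶜ, G ∂edgeMeasure) x) :=
        setLIntegral_mono' isCompact_Q3.measurableSet hpointwise
    _ = 64 * ((∫⁻ x, F x ∂Measure.pi edgeMeasure) * ∫⁻ x, G x ∂Measure.pi edgeMeasure) := by
        rw [restrict_Q3, lintegral_const_mul _ hmul,
          lintegral_lmarginal_mul_lmarginal_compl S hF hG]
    _ = ENNReal.ofReal ((8 * (HsNorm m f * HsNorm n g)) ^ 2) := by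
        rw [lintegral_jetSq m hf, lintegral_jetSq n hg, ← ENNReal.ofReal_mul (sq_nonneg _),
          ← ENNReal.ofReal_ofNat 64, ← ENNReal.ofReal_mul (by norm_num)]
        ring_nf

theorem L2_mderiv_mul_mderiv_le {m n : ℕ} {β γ : Fin 3 → ℕ} (hf : SmoothS f) (hg : SmoothS g)
    (hβ : ∑ j, β j ≤ m) (hγ : ∑ j, γ j ≤ n) (hβγ : ∑ j, β j + ∑ j, γ j + 3 ≤ m + n) :
    L2 (mderiv β f * mderiv γ g) ≤ 8 * (HsNorm m f * HsNorm n g) := by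
  obtain ⟨S, -, hS⟩ := Finset.exists_subset_card_eq
    (s := (Finset.univ : Finset (Fin 3))) (n := min 3 (m - ∑ j, β j)) (by simp)
  have hcard : S.card + Sᶜ.card = 3 := S.card_add_card_compl
  exact L2_mderiv_mul_mderiv_le_of_card hf hg S (by lia) (by lia)

end AnisotropicSobolev

section Moser

variable {f g : SF}

theorem L2_mderiv_mul_le {m n : ℕ} (δ : Fin 3 → ℕ) {β γ : Fin 3 → ℕ} (hf : SmoothS f)
    (hg : SmoothS g) (hβ : ∑ j, δ j + ∑ j, β j ≤ m) (hγ : ∑ j, δ j + ∑ j, γ j ≤ n)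
    (hβγ : ∑ j, δ j + ∑ j, β j + ∑ j, γ j + 3 ≤ m + n) :
    L2 (mderiv δ (mderiv β f * mderiv γ g)) ≤
      2 ^ (∑ j, δ j) * (8 * (HsNorm m f * HsNorm n g)) := by
  induction δ using multiIndex_induction generalizing β γ with
  | zero =>
    simp only [Pi.zero_apply, Finset.sum_const_zero, zero_add] at hβ hγ hβγ
    simpa [mderiv_zero] using L2_mderiv_mul_mderiv_le hf hg hβ hγ hβγ
  | add_single δ i ih =>
    have hβi := sum_add_single β i
    have hγi := sum_add_single γ i
    rw [sum_add_single] at hβ hγ hβγ ⊢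
    have smoothβγ (η ζ : Fin 3 → ℕ) : SmoothS (mderiv η f * mderiv ζ g) :=
      smoothS_mul (smoothS_mderiv η hf) (smoothS_mderiv ζ hg)
    have hLeibniz : mderiv (δ + Pi.single i 1) (mderiv β f * mderiv γ g) =
        mderiv δ (mderiv (β + Pi.single i 1) f * mderiv γ g) +
          mderiv δ (mderiv β f * mderiv (γ + Pi.single i 1) g) := by
      rw [← mderiv_pd δ i (smoothβγ β γ), pd_mul i (smoothS_mderiv β hf) (smoothS_mderiv γ hg),
        ← mderiv_add_single β i hf, ← mderiv_add_single γ i hg,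
        mderiv_add δ (smoothβγ _ _) (smoothβγ _ _)]
    have hL2 := L2_add_le (smoothS_mderiv δ (smoothβγ (β + Pi.single i 1) γ)).continuous
      (smoothS_mderiv δ (smoothβγ β (γ + Pi.single i 1))).continuous
    have hleft := ih (β := β + Pi.single i 1) (γ := γ) (by lia) (by lia) (by lia)
    have hright := ih (β := β) (γ := γ + Pi.single i 1) (by lia) (by lia) (by lia)
    rw [hLeibniz, pow_succ]
    linarith

end Moser

section Commutator

/-- The commutator `[∂^α, f] g = ∂^α (f g) - f ∂^α g`. -/
noncomputable def mderivComm (α : Fin 3 → ℕ) (f g : SF) : SF := mderiv α (f * g) - f * mderiv α g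

variable {f f₁ f₂ g g₁ g₂ : SF}

theorem mderivComm_zero (f g : SF) : mderivComm 0 f g = 0 := by
  simp [mderivComm, mderiv_zero]

theorem smoothS_mderivComm (α : Fin 3 → ℕ) (hf : SmoothS f) (hg : SmoothS g) :
    SmoothS (mderivComm α f g) :=
  (smoothS_mderiv α (smoothS_mul hf hg)).sub (hf.mul (smoothS_mderiv α hg))

theorem mderivComm_add_left (α : Fin 3 → ℕ) (hf₁ : SmoothS f₁) (hf₂ : SmoothS f₂)
    (hg : SmoothS g) :
    mderivComm α (f₁ + f₂) g = mderivComm α f₁ g + mderivComm α f₂ g := by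
  simp only [mderivComm]
  rw [add_mul, mderiv_add α (smoothS_mul hf₁ hg) (smoothS_mul hf₂ hg)]
  ring

theorem mderivComm_add_right (α : Fin 3 → ℕ) (hf : SmoothS f) (hg₁ : SmoothS g₁)
    (hg₂ : SmoothS g₂) :
    mderivComm α f (g₁ + g₂) = mderivComm α f g₁ + mderivComm α f g₂ := by
  simp only [mderivComm]
  rw [mul_add, mderiv_add α (smoothS_mul hf hg₁) (smoothS_mul hf hg₂), mderiv_add α hg₁ hg₂]
  ring

theorem mderivComm_add_single (α : Fin 3 → ℕ) (i : Fin 3) (hf : SmoothS f) (hg : SmoothS g) :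
    mderivComm (α + Pi.single i 1) f g = mderiv α (pd i f * g) + mderivComm α f (pd i g) := by
  simp only [mderivComm]
  rw [← mderiv_pd α i hg, ← mderiv_pd α i (smoothS_mul hf hg), pd_mul i hf hg,
    mderiv_add α (smoothS_mul (smoothS_pd i hf) hg) (smoothS_mul hf (smoothS_pd i hg))]
  ring

theorem L2_mderivComm_mderiv_le {m n : ℕ} (α : Fin 3 → ℕ) {γ : Fin 3 → ℕ} (hf : SmoothS f)
    (hg : SmoothS g) (hα : ∑ j, α j ≤ m) (hγ : ∑ j, α j + ∑ j, γ j ≤ n + 1)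
    (hαγ : ∑ j, α j + ∑ j, γ j + 3 ≤ m + n) :
    L2 (mderivComm α f (mderiv γ g)) ≤ 2 ^ (∑ j, α j) * (8 * (HsNorm m f * HsNorm n g)) := by
  induction α using multiIndex_induction generalizing γ with
  | zero =>
    have hL2 : L2 0 = 0 := by simp [L2]
    rw [mderivComm_zero, hL2]
    positivity [HsNorm_nonneg m f, HsNorm_nonneg n g]
  | add_single α i ih =>
    have hi : ∑ j, (Pi.single i 1 : Fin 3 → ℕ) j = 1 := by simp
    have hγi := sum_add_single γ i
    rw [sum_add_single] at hα hγ hαγ ⊢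
    have hleft := L2_mderiv_mul_le (m := m) (n := n) α (β := Pi.single i 1) (γ := γ) hf hg
      (by lia) (by lia) (by lia)
    rw [mderiv_single] at hleft
    have hright := ih (γ := γ + Pi.single i 1) (by lia) (by lia) (by lia)
    have hL2 := L2_add_le
      (smoothS_mderiv α (smoothS_mul (smoothS_pd i hf) (smoothS_mderiv γ hg))).continuous
      (smoothS_mderivComm α hf (smoothS_mderiv (γ + Pi.single i 1) hg)).continuous
    rw [mderivComm_add_single α i hf (smoothS_mderiv γ hg), ← mderiv_add_single γ i hg, pow_succ]
    linarith

theorem L2_mderivComm_divv_le {s : ℕ} {α : Fin 3 → ℕ} {U : VF} (hf : SmoothS f) (hU : SmoothV U)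
    (hα : ∑ j, α j ≤ s) (hα' : ∑ j, α j + 4 ≤ 2 * s) :
    L2 (mderivComm α f (divv U)) ≤ 24 * 2 ^ (∑ j, α j) * (HsNorm s f * HsNormV s U) := by
  have smooth_pd i : SmoothS (pd i (U i)) := smoothS_pd i (hU i)
  have smooth_comm i : Continuous (mderivComm α f (pd i (U i))) :=
    (smoothS_mderivComm α hf (smooth_pd i)).continuous
  have hpd : ∀ i, L2 (mderivComm α f (pd i (U i))) ≤
      2 ^ (∑ j, α j) * (8 * (HsNorm s f * HsNormV s U)) := fun i => by
    have hi : ∑ j, (Pi.single i 1 : Fin 3 → ℕ) j = 1 := by simp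
    rw [← mderiv_single]
    refine (L2_mderivComm_mderiv_le (m := s) (n := s) α hf (hU i) hα (by lia) (by lia)).trans ?_
    gcongr
    · exact HsNorm_nonneg s f
    · exact HsNorm_le_HsNormV s U i
  have hdiv : divv U = pd 0 (U 0) + pd 1 (U 1) + pd 2 (U 2) :=
    funext fun x => Fin.sum_univ_three _
  rw [hdiv, mderivComm_add_right α hf (smoothS_add (smooth_pd 0) (smooth_pd 1)) (smooth_pd 2),
    mderivComm_add_right α hf (smooth_pd 0) (smooth_pd 1)]
  have h₂ := L2_add_le ((smooth_comm 0).add (smooth_comm 1)) (smooth_comm 2)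
  have h₁ := L2_add_le (smooth_comm 0) (smooth_comm 1)
  linarith [hpd 0, hpd 1, hpd 2]

end Commutator

theorem mul_add_mul_le_one_add_abs_mul_sq_add {n u r K : ℝ} (hn : 0 ≤ n) (hu : 0 ≤ u)
    (hr : r ≤ K) : n * u + r * u ≤ (1 + |K|) * ((n + u) ^ 2 + (n + u)) := by
  have hnu : n * u ≤ (n + u) ^ 2 := by nlinarith [sq_nonneg n, sq_nonneg u, mul_nonneg hn hu]
  have hru : r * u ≤ |K| * (n + u) :=
    mul_le_mul (hr.trans (le_abs_self K)) (le_add_of_nonneg_left hn) hu (abs_nonneg K)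
  have hrest : 0 ≤ |K| * (n + u) ^ 2 := by positivity
  linarith

theorem commutator_divergence_general (s : ℕ) (α : Fin 3 → ℕ) (hα : ∑ i, α i ≤ s)
    (hα' : ∑ i, α i + 4 ≤ 2 * s) (K : ℝ) :
    ∃ C > (0 : ℝ), ∀ ρ0 : SF, SmoothS ρ0 → HsNorm s ρ0 ≤ K →
      ∀ (N : SF) (U : VF), SmoothS N → SmoothV U →
        L2 (mderivComm α (N + ρ0) (divv U)) ≤
          C * ((HsNorm s N + HsNormV s U) ^ 2 + (HsNorm s N + HsNormV s U)) := by
  refine ⟨24 * 2 ^ (∑ i, α i) * (1 + |K|), by positivity, fun ρ0 hρ0 hK N U hN hU => ?_⟩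
  have hdiv : SmoothS (divv U) := ContDiff.sum fun i _ => smoothS_pd i (hU i)
  calc L2 (mderivComm α (N + ρ0) (divv U))
      ≤ L2 (mderivComm α N (divv U)) + L2 (mderivComm α ρ0 (divv U)) := by
        rw [mderivComm_add_left α hN hρ0 hdiv]
        exact L2_add_le (smoothS_mderivComm α hN hdiv).continuous
          (smoothS_mderivComm α hρ0 hdiv).continuous
    _ ≤ 24 * 2 ^ (∑ i, α i) * (HsNorm s N * HsNormV s U) +
          24 * 2 ^ (∑ i, α i) * (HsNorm s ρ0 * HsNormV s U) :=
        add_le_add (L2_mderivComm_divv_le hN hU hα hα') (L2_mderivComm_divv_le hρ0 hU hα hα')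
    _ = 24 * 2 ^ (∑ i, α i) * (HsNorm s N * HsNormV s U + HsNorm s ρ0 * HsNormV s U) :=
        (mul_add _ _ _).symm
    _ ≤ 24 * 2 ^ (∑ i, α i) * ((1 + |K|) *
          ((HsNorm s N + HsNormV s U) ^ 2 + (HsNorm s N + HsNormV s U))) := by
        gcongr
        exact mul_add_mul_le_one_add_abs_mul_sq_add (HsNorm_nonneg s N) (HsNormV_nonneg s U) hK
    _ = _ := (mul_assoc _ _ _).symm

/-- Moser-type commutator estimate for the divergence term.
Let `s > 7/2` be an integer and `|α| ≤ s`. There is a constant `C`, depending only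
on `s` (and `α`) and an upper bound `K` for `‖ρ⁰‖_{H^s}`, such that for all periodic
`N, U` of Sobolev class `H^s` (here taken smooth):
`‖∂^α((N+ρ⁰)div U) − (N+ρ⁰)∂^α div U‖_{L²} ≤ C(‖(N,U)‖²_{H^s} + ‖(N,U)‖_{H^s})`. -/
theorem commutator_divergence (s : ℕ) (hs : 7/2 < (s:ℝ)) (α : Fin 3 → ℕ)
    (hα : (∑ i, α i) ≤ s) (K : ℝ) :
    ∃ C > (0:ℝ), ∀ ρ0 : SF, SmoothS ρ0 → PerS ρ0 → HsNorm s ρ0 ≤ K →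
      ∀ (N : SF) (U : VF), SmoothS N → PerS N → SmoothV U → PerV U →
        L2 (fun x => mderiv α (fun y => (N y + ρ0 y) * divv U y) x
              - (N x + ρ0 x) * mderiv α (divv U) x)
          ≤ C * ((HsNorm s N + HsNormV s U) ^ 2 + (HsNorm s N + HsNormV s U)) := by
  have hs' : 3 < s := by exact_mod_cast (by linarith : (3 : ℝ) < s)
  obtain ⟨C, hC, hbound⟩ := commutator_divergence_general s α hα (by lia) K
  exact ⟨C, hC, fun ρ0 hρ0 _ hK N U hN _ hU _ => hbound ρ0 hρ0 hK N U hN hU⟩
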